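/- Let S = s₁s₂… be an infinite 0-1 sequence such that the set {i : s_i = 1} has lower natural density α > 0. Define E_S = {x ∈ [0,1) : x = Σ x_i 2^{-i}, x_i ∈ {0,1}, x_i = 0 whenever s_i = 0}. Then the Hausdorff dimension of E_S equals α. -/

import Mathlib

open Filter MeasureTheory Set

/-- The `n`-th binary digit of `x ∈ [0,1)` (dyadic rationals get the
terminating expansion, i.e. the one with finitely many `1`'s). -/
noncomputable def digit (x : ℝ) (n : ℕ) : ℕ := (⌊x * 2 ^ n⌋).toNat % 2

/-- Positions of digit `1` in the binary expansion of `x`. -/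
def onesOf (x : ℝ) : Set ℕ := {n : ℕ | digit x n = 1}

/-- `A` contains an `m`-term arithmetic progression. -/
def HasAP (A : Set ℕ) (m : ℕ) : Prop :=
  ∃ a d : ℕ, 1 ≤ d ∧ ∀ t < m, a + t * d ∈ A

/-- `F i`: numbers in `[0,1)` whose binary expansion contains no `i`-term
arithmetic progression of positions of digit `1`. -/
noncomputable def F (i : ℕ) : Set ℝ :=
  {x ∈ Set.Ico (0 : ℝ) 1 | ¬ HasAP (onesOf x) i}

/-- The Erdős set. -/
noncomputable def E : Set ℝ := ⋃ i, ⋃ (_ : 3 ≤ i), F i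

/-- The set of reals in `[0,1)` whose binary digits are supported on the
positions where `S` is `true`. -/
noncomputable def ES (S : ℕ → Bool) : Set ℝ :=
  {x ∈ Set.Ico (0 : ℝ) 1 | ∀ i : ℕ, S i = false → digit x i = 0}

/- Write `c n` for the number of free positions among the first `n`. Two points of the set that
agree in their first `n` digits are `b⁻ⁿ`-close, and there are only `b ^ c n` patterns of such
digits; this bounds the Hausdorff measure above along the `n` with `c n ≤ d n`. Conversely, writing
the digits of `t ∈ [0, 1)` into the free positions gives a map into the set. On integer prefixes
this map is strictly increasing, so points whose images are `b⁻ⁿ`-close are themselves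
`2 b^(-c n)`-close: the inverse map, which is onto `[0, 1)`, is `r`-Hölder for every positive `r`
below the lower density. -/

open scoped ENNReal NNReal Topology

section HausdorffDimension

theorem dimH_le_dimH_image_div_of_edist_le {X Y : Type*} [EMetricSpace X] [EMetricSpace Y]
    {f : X → Y} {s : Set X} {C r : ℝ≥0} (hr : 0 < r)
    (h : ∀ x ∈ s, ∀ y ∈ s, edist x y ≤ C * edist (f x) (f y) ^ (r : ℝ)) :
    dimH s ≤ dimH (f '' s) / r := by
  rcases s.eq_empty_or_nonempty with rfl | ⟨x₀, -⟩
  · simp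
  have : Nonempty X := ⟨x₀⟩
  have hinj : InjOn f s := fun x hx y hy hxy => by
    have := h x hx y hy
    rwa [hxy, edist_self, ENNReal.zero_rpow_of_pos (by exact_mod_cast hr), mul_zero,
      nonpos_iff_eq_zero, edist_eq_zero] at this
  have hholder : HolderOnWith C r (Function.invFunOn f s) (f '' s) := fun z hz w hw => by
    simpa only [Function.invFunOn_eq hz, Function.invFunOn_eq hw] using
      h _ (Function.invFunOn_mem hz) _ (Function.invFunOn_mem hw)
  simpa only [hinj.leftInvOn_invFunOn.image_image] using hholder.dimH_image_le hr

theorem le_mul_rpow_of_forall_le_pow {a d q C r : ℝ} (hq0 : 0 < q) (hq1 : q < 1) (hC : 0 ≤ C)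
    (hr : 0 < r) (hd0 : 0 ≤ d) (hd1 : d ≤ 1) (h : ∀ n : ℕ, d ≤ q ^ n → a ≤ C * (q ^ n) ^ r) :
    a ≤ C * (d / q) ^ r := by
  rcases hd0.eq_or_lt with rfl | hd
  · have hlim : Tendsto (fun n : ℕ => C * (q ^ n) ^ r) atTop (𝓝 (C * 0 ^ r)) :=
      ((tendsto_pow_atTop_nhds_zero_of_lt_one hq0.le hq1).rpow_const (Or.inr hr.le)).const_mul C
    simpa only [zero_div] using ge_of_tendsto' hlim fun n => h n (by positivity)
  · obtain ⟨n, hlt, hle⟩ := exists_nat_pow_near_of_lt_one hd hd1 hq0 hq1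
    have : q ^ n ≤ d / q := (le_div_iff₀ hq0).2 (pow_succ q n ▸ hlt.le)
    exact (h n hle).trans (by gcongr)

theorem pow_mul_inv_pow_rpow_le_one {B : ℝ≥0∞} (hB : 1 ≤ B) {c n : ℕ} {d : ℝ}
    (h : (c : ℝ) ≤ d * n) : B ^ c * (B⁻¹ ^ n) ^ d ≤ 1 := by
  rw [← ENNReal.inv_pow, ENNReal.inv_rpow, ← div_eq_mul_inv]
  refine ENNReal.div_le_of_le_mul ?_
  rw [one_mul, ← ENNReal.rpow_natCast, ← ENNReal.rpow_natCast, ← ENNReal.rpow_mul, mul_comm]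
  exact ENNReal.rpow_le_rpow_of_exponent_le hB h

end HausdorffDimension

section DigitExpansions

variable {b : ℕ}

theorem ofDigits_lt_one {e : ℕ → Fin b} {i : ℕ} (hi : (e i : ℕ) + 1 < b) :
    Real.ofDigits e < 1 := by
  have hterm : ∀ n, Real.ofDigitsTerm e n ≤
      Real.ofDigitsTerm (Function.update e i ⟨e i + 1, hi⟩) n := fun n => by
    rcases eq_or_ne n i with rfl | hn
    · simp only [Real.ofDigitsTerm, Function.update_self]
      gcongr
      simp
    · simp [Real.ofDigitsTerm, hn]
  have hlt : Real.ofDigitsTerm e i < Real.ofDigitsTerm (Function.update e i ⟨e i + 1, hi⟩) i := by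
    have : 0 < b := by omega
    simp only [Real.ofDigitsTerm, Function.update_self]
    gcongr
    simp
  exact (Summable.tsum_lt_tsum hterm hlt Real.summable_ofDigitsTerm
    Real.summable_ofDigitsTerm).trans_le (Real.ofDigits_le_one _)

theorem exists_natCast_eq_pow_mul_sum_ofDigitsTerm (e : ℕ → Fin b) (n : ℕ) :
    ∃ N : ℕ, (b : ℝ) ^ n * ∑ i ∈ Finset.range n, Real.ofDigitsTerm e i = N := by
  have hb : (b : ℝ) ≠ 0 := by exact_mod_cast (Fin.pos (e 0)).ne'
  induction n with
  | zero => exact ⟨0, by simp⟩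
  | succ n ih =>
    obtain ⟨N, hN⟩ := ih
    refine ⟨b * N + e n, ?_⟩
    rw [Finset.sum_range_succ, Real.ofDigitsTerm]
    push_cast
    rw [← hN]
    field_simp
    ring

theorem digits_ofDigits [NeZero b] {e : ℕ → Fin b} (he : ∀ n, ∃ i ≥ n, (e i : ℕ) + 1 < b) :
    Real.digits (Real.ofDigits e) b = e := by
  have hb : (b : ℝ) ≠ 0 := NeZero.ne _
  funext n
  obtain ⟨N, hN⟩ := exists_natCast_eq_pow_mul_sum_ofDigitsTerm e n
  set y := Real.ofDigits fun i => e (i + (n + 1)) with hy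
  have hy0 : 0 ≤ y := Real.ofDigits_nonneg _
  have hy1 : y < 1 := by
    obtain ⟨i, hi, hei⟩ := he (n + 1)
    exact ofDigits_lt_one (i := i - (n + 1)) (by simpa only [Nat.sub_add_cancel hi] using hei)
  have hsplit : Real.ofDigits e * b ^ (n + 1) = (b * N + e n : ℕ) + y := by
    rw [Real.ofDigits_eq_sum_add_ofDigits e (n + 1), Finset.sum_range_succ, Real.ofDigitsTerm]
    push_cast
    rw [← hN, ← hy]
    field_simp
    ring
  have hfloor : ⌊Real.ofDigits e * b ^ (n + 1)⌋₊ = b * N + e n := by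
    rw [hsplit, add_comm, Nat.floor_add_natCast hy0, Nat.floor_eq_zero.2 hy1, zero_add]
  ext
  rw [Real.digits, hfloor, Fin.val_ofNat, Nat.mul_add_mod, Nat.mod_eq_of_lt (e n).isLt]

theorem exists_ge_digits_add_one_lt [NeZero b] (hb : 1 < b) {x : ℝ} (hx : x ∈ Ico (0 : ℝ) 1)
    (n : ℕ) : ∃ i ≥ n, (Real.digits x b i : ℕ) + 1 < b := by
  by_contra! hlast
  have htail : (fun i => Real.digits x b (i + n)) = fun _ => ⟨b - 1, Nat.sub_one_lt_of_lt hb⟩ := by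
    funext i
    ext
    have := hlast (i + n) (Nat.le_add_left n i)
    have := (Real.digits x b (i + n)).isLt
    simp only
    omega
  have hx_eq := Real.ofDigits_eq_sum_add_ofDigits (Real.digits x b) n
  rw [Real.ofDigits_digits hb hx, htail, Real.ofDigits_const_last_eq_one' hb, mul_one] at hx_eq
  have hfloor : (⌊(b : ℝ) ^ n * x⌋₊ : ℝ) + 1 = b ^ n * x := by
    have : (b : ℝ) ^ n ≠ 0 := pow_ne_zero _ (NeZero.ne _)
    rw [← Real.ofDigits_digits_sum_eq hx n]
    nth_rewrite 2 [hx_eq]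
    rw [mul_add, mul_inv_cancel₀ this]
  exact (Nat.lt_floor_add_one _).ne hfloor.symm

/-- The integer written in base `b` by the first `n` digits after the point of `x ∈ [0, 1)`. -/
noncomputable def digitPrefix (b : ℕ) (x : ℝ) (n : ℕ) : ℕ := ⌊x * b ^ n⌋₊

theorem digitPrefix_zero {x : ℝ} (hx : x < 1) : digitPrefix b x 0 = 0 := by
  simpa [digitPrefix] using hx

theorem digitPrefix_succ_mod [NeZero b] (x : ℝ) (n : ℕ) :
    digitPrefix b x (n + 1) % b = Real.digits x b n :=
  rfl

theorem digitPrefix_succ_div [NeZero b] (x : ℝ) (n : ℕ) :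
    digitPrefix b x (n + 1) / b = digitPrefix b x n := by
  have hb : (b : ℝ) ≠ 0 := NeZero.ne _
  rw [digitPrefix, digitPrefix, ← Nat.floor_div_natCast, pow_succ, ← mul_assoc,
    mul_div_cancel_right₀ _ hb]

theorem digitPrefix_le_add_one [NeZero b] {x y : ℝ} (hx : 0 ≤ x) {n : ℕ}
    (h : y ≤ x + ((b : ℝ) ^ n)⁻¹) : digitPrefix b y n ≤ digitPrefix b x n + 1 := by
  have hbn : (0 : ℝ) < b ^ n := pow_pos (Nat.cast_pos.2 (NeZero.pos b)) n
  rw [digitPrefix, digitPrefix, ← Nat.floor_add_one (by positivity)]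
  refine Nat.floor_le_floor ?_
  calc y * b ^ n ≤ (x + ((b : ℝ) ^ n)⁻¹) * b ^ n := by gcongr
    _ = x * b ^ n + 1 := by rw [add_mul, inv_mul_cancel₀ hbn.ne']

theorem le_add_of_digitPrefix_le_add_one [NeZero b] {x y : ℝ} (hx : 0 ≤ x) {n : ℕ}
    (h : digitPrefix b y n ≤ digitPrefix b x n + 1) : y ≤ x + 2 * ((b : ℝ) ^ n)⁻¹ := by
  have hbn : (0 : ℝ) < b ^ n := pow_pos (Nat.cast_pos.2 (NeZero.pos b)) n
  have hxy : (digitPrefix b y n : ℝ) ≤ digitPrefix b x n + 1 := by exact_mod_cast h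
  refine le_of_mul_le_mul_right ?_ hbn
  calc y * b ^ n ≤ digitPrefix b y n + 1 := (Nat.lt_floor_add_one _).le
    _ ≤ digitPrefix b x n + 2 := by linarith
    _ ≤ x * b ^ n + 2 := by gcongr; exact Nat.floor_le (by positivity)
    _ = (x + 2 * ((b : ℝ) ^ n)⁻¹) * b ^ n := by
      rw [add_mul, mul_assoc, inv_mul_cancel₀ hbn.ne', mul_one]

end DigitExpansions

section RestrictedDigits

variable {b : ℕ} [NeZero b] {p : ℕ → Prop}

/-- The reals in `[0, 1)` whose base-`b` digits vanish outside the positions satisfying `p`.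
Positions follow `Real.digits`: position `n` has weight `b ^ (-(n + 1))`. -/
def restrictedDigitSet (b : ℕ) [NeZero b] (p : ℕ → Prop) : Set ℝ :=
  {x ∈ Ico (0 : ℝ) 1 | ∀ n, ¬ p n → Real.digits x b n = 0}

theorem ediam_le_of_digits_eq (hb : 1 < b) {s : Set ℝ} (hs : s ⊆ Ico 0 1) {n : ℕ}
    (h : ∀ x ∈ s, ∀ y ∈ s, ∀ i < n, Real.digits x b i = Real.digits y b i) :
    Metric.ediam s ≤ (b : ℝ≥0∞)⁻¹ ^ n := by
  refine Metric.ediam_le fun x hx y hy => ?_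
  have hdist := Real.abs_ofDigits_sub_ofDigits_le (h x hx y hy)
  rw [Real.ofDigits_digits hb (hs hx), Real.ofDigits_digits hb (hs hy)] at hdist
  have hbn : (0 : ℝ) < b ^ n := pow_pos (Nat.cast_pos.2 (NeZero.pos b)) n
  calc edist x y ≤ ENNReal.ofReal ((b : ℝ) ^ n)⁻¹ := by
        rw [edist_dist, Real.dist_eq]
        exact ENNReal.ofReal_le_ofReal hdist
    _ = (b : ℝ≥0∞)⁻¹ ^ n := by
        rw [ENNReal.ofReal_inv_of_pos hbn, ENNReal.ofReal_pow (Nat.cast_nonneg b),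
          ENNReal.ofReal_natCast, ENNReal.inv_pow]

variable [DecidablePred p]

theorem hausdorffMeasure_restrictedDigitSet_le_one (hb : 1 < b) {d : ℝ≥0}
    (hd : ∃ᶠ n : ℕ in atTop, (Nat.count p n : ℝ) ≤ d * n) :
    Measure.hausdorffMeasure d (restrictedDigitSet b p) ≤ 1 := by
  let cylinder (n : ℕ) (w : (Finset.range n).filter p → Fin b) : Set ℝ :=
    {x ∈ restrictedDigitSet b p | ∀ k, Real.digits x b k.1 = w k}
  have hdiam : ∀ n w, Metric.ediam (cylinder n w) ≤ (b : ℝ≥0∞)⁻¹ ^ n := fun n w =>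
    ediam_le_of_digits_eq hb (fun x hx => hx.1.1) fun x hx y hy i hi => by
      by_cases hpi : p i
      · let k : (Finset.range n).filter p := ⟨i, by simp [hi, hpi]⟩
        exact (hx.2 k).trans (hy.2 k).symm
      · rw [hx.1.2 i hpi, hy.1.2 i hpi]
  have hscale : Tendsto (fun n : ℕ => (b : ℝ≥0∞)⁻¹ ^ n) atTop (𝓝 0) :=
    ENNReal.tendsto_pow_atTop_nhds_zero_of_lt_one
      (ENNReal.inv_lt_one.2 (by exact_mod_cast hb))
  have hcover : ∀ n, restrictedDigitSet b p ⊆ ⋃ w, cylinder n w := fun n x hx =>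
    mem_iUnion.2 ⟨fun k => Real.digits x b k, hx, fun _ => rfl⟩
  refine (Measure.hausdorffMeasure_le_liminf_sum d _ _ hscale cylinder
    (Eventually.of_forall hdiam) (Eventually.of_forall hcover)).trans ?_
  refine liminf_le_of_frequently_le (hd.mono fun n hn => ?_)
  calc ∑ w, Metric.ediam (cylinder n w) ^ (d : ℝ)
      ≤ ∑ _w : (Finset.range n).filter p → Fin b, ((b : ℝ≥0∞)⁻¹ ^ n) ^ (d : ℝ) :=
        Finset.sum_le_sum fun w _ => ENNReal.rpow_le_rpow (hdiam n w) d.coe_nonneg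
    _ = (b : ℝ≥0∞) ^ Nat.count p n * ((b : ℝ≥0∞)⁻¹ ^ n) ^ (d : ℝ) := by
        rw [Finset.sum_const, Finset.card_univ, Fintype.card_fun, Fintype.card_coe,
          Fintype.card_fin, ← Nat.count_eq_card_filter_range, nsmul_eq_mul, Nat.cast_pow]
    _ ≤ 1 := pow_mul_inv_pow_rpow_le_one (by exact_mod_cast hb.le) hn

/-- The real obtained from `t` by writing its base-`b` digits, in order, into the positions
satisfying `p`, and `0` into all the others. -/
noncomputable def spread (b : ℕ) [NeZero b] (p : ℕ → Prop) [DecidablePred p] (t : ℝ) : ℝ :=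
  Real.ofDigits fun n => if p n then Real.digits t b (Nat.count p n) else 0

/-- The action of `spread` on integer prefixes: the last digits of `a` are written, in order, into
the positions below `n` satisfying `p`, and `0` into the others. The remaining leading digits of `a`
are kept in front, which makes the map strictly monotone on all of `ℕ`. -/
def spreadNat (b : ℕ) (p : ℕ → Prop) [DecidablePred p] : ℕ → ℕ → ℕ
  | 0, a => a
  | n + 1, a => if p n then b * spreadNat b p n (a / b) + a % b else b * spreadNat b p n a

theorem spreadNat_strictMono (n : ℕ) : StrictMono (spreadNat b p n) := by
  have hb : 0 < b := NeZero.pos b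
  induction n with
  | zero => exact strictMono_id
  | succ n ih =>
    intro a a' haa'
    by_cases hp : p n
    · simp only [spreadNat, if_pos hp]
      rcases (Nat.div_le_div_right (c := b) haa'.le).eq_or_lt with hdiv | hdiv
      · have ha := Nat.div_add_mod a b
        have ha' := Nat.div_add_mod a' b
        rw [hdiv] at ha ⊢
        omega
      · calc b * spreadNat b p n (a / b) + a % b
            < b * (spreadNat b p n (a / b) + 1) := by
              rw [mul_add_one]
              exact Nat.add_lt_add_left (Nat.mod_lt a hb) _
          _ ≤ b * spreadNat b p n (a' / b) := Nat.mul_le_mul_left b (ih hdiv)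
          _ ≤ _ := Nat.le_add_right _ _
    · simp only [spreadNat, if_neg hp]
      exact Nat.mul_lt_mul_of_pos_left (ih haa') hb

theorem digits_spread (hb : 1 < b) (hp : {n | p n}.Infinite) {t : ℝ} (ht : t ∈ Ico (0 : ℝ) 1)
    (n : ℕ) :
    Real.digits (spread b p t) b n = if p n then Real.digits t b (Nat.count p n) else 0 := by
  refine congrFun (digits_ofDigits fun n => ?_) n
  obtain ⟨k, hk, hlt⟩ := exists_ge_digits_add_one_lt hb ht (Nat.count p n)
  refine ⟨Nat.nth p k, (Nat.count_le_iff_le_nth hp).1 hk, ?_⟩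
  rwa [if_pos (Nat.nth_mem_of_infinite hp k), Nat.count_nth_of_infinite hp]

theorem spread_mem_Ico (hb : 1 < b) (hp : {n | p n}.Infinite) {t : ℝ} (ht : t ∈ Ico (0 : ℝ) 1) :
    spread b p t ∈ Ico (0 : ℝ) 1 := by
  obtain ⟨i, -, hi⟩ := exists_ge_digits_add_one_lt hb ht 0
  refine ⟨Real.ofDigits_nonneg _, ofDigits_lt_one (i := Nat.nth p i) ?_⟩
  rwa [if_pos (Nat.nth_mem_of_infinite hp i), Nat.count_nth_of_infinite hp]

theorem spread_mem_restrictedDigitSet (hb : 1 < b) (hp : {n | p n}.Infinite) {t : ℝ}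
    (ht : t ∈ Ico (0 : ℝ) 1) : spread b p t ∈ restrictedDigitSet b p :=
  ⟨spread_mem_Ico hb hp ht, fun n hn => by rw [digits_spread hb hp ht, if_neg hn]⟩

theorem digitPrefix_spread (hb : 1 < b) (hp : {n | p n}.Infinite) {t : ℝ}
    (ht : t ∈ Ico (0 : ℝ) 1) (n : ℕ) :
    digitPrefix b (spread b p t) n = spreadNat b p n (digitPrefix b t (Nat.count p n)) := by
  induction n with
  | zero =>
    rw [Nat.count_zero, digitPrefix_zero (spread_mem_Ico hb hp ht).2, digitPrefix_zero ht.2,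
      spreadNat]
  | succ n ih =>
    rw [← Nat.div_add_mod (digitPrefix b _ (n + 1)) b, digitPrefix_succ_div, digitPrefix_succ_mod,
      digits_spread hb hp ht, ih, spreadNat, Nat.count_succ]
    split_ifs
    · rw [digitPrefix_succ_div, digitPrefix_succ_mod]
    · rw [Fin.val_zero, add_zero, add_zero]

theorem le_add_of_spread_le_add (hb : 1 < b) (hp : {n | p n}.Infinite) {t u : ℝ}
    (ht : t ∈ Ico (0 : ℝ) 1) (hu : u ∈ Ico (0 : ℝ) 1) {n : ℕ}
    (h : spread b p u ≤ spread b p t + ((b : ℝ) ^ n)⁻¹) :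
    u ≤ t + 2 * ((b : ℝ) ^ Nat.count p n)⁻¹ := by
  refine le_add_of_digitPrefix_le_add_one ht.1 ?_
  have hprefix := digitPrefix_le_add_one (spread_mem_Ico hb hp ht).1 h
  rw [digitPrefix_spread hb hp ht, digitPrefix_spread hb hp hu] at hprefix
  by_contra! hgap
  have hstrict := spreadNat_strictMono (b := b) (p := p) n
  have hexpand := hstrict.add_le_nat 2 (digitPrefix b t (Nat.count p n))
  have hmono := hstrict.monotone
    (show 2 + digitPrefix b t (Nat.count p n) ≤ digitPrefix b u (Nat.count p n) by omega)
  omega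

theorem abs_sub_le_of_abs_spread_sub_le (hb : 1 < b) (hp : {n | p n}.Infinite) {t u : ℝ}
    (ht : t ∈ Ico (0 : ℝ) 1) (hu : u ∈ Ico (0 : ℝ) 1) {n : ℕ}
    (h : |spread b p t - spread b p u| ≤ ((b : ℝ) ^ n)⁻¹) :
    |t - u| ≤ 2 * ((b : ℝ) ^ Nat.count p n)⁻¹ := by
  rw [abs_sub_le_iff, sub_le_iff_le_add', sub_le_iff_le_add'] at h ⊢
  exact ⟨le_add_of_spread_le_add hb hp hu ht h.1, le_add_of_spread_le_add hb hp ht hu h.2⟩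

theorem infinite_of_eventually_mul_le_count {r : ℝ} (hr : 0 < r)
    (h : ∀ᶠ n : ℕ in atTop, r * n ≤ Nat.count p n) : {n | p n}.Infinite := by
  intro hfin
  have htop : Tendsto (fun n : ℕ => r * n) atTop atTop :=
    tendsto_natCast_atTop_atTop.const_mul_atTop hr
  obtain ⟨n, hle, hlt⟩ := (h.and (htop.eventually_gt_atTop (hfin.toFinset.card : ℝ))).exists
  exact (hlt.trans_le hle).not_ge (by exact_mod_cast Nat.count_le_card hfin n)

theorem exists_forall_mul_le_count_add {r : ℝ≥0}
    (h : ∀ᶠ n : ℕ in atTop, (r : ℝ) * n ≤ Nat.count p n) :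
    ∃ K : ℝ, ∀ n : ℕ, (r : ℝ) * n ≤ Nat.count p n + K := by
  obtain ⟨N, hN⟩ := eventually_atTop.1 h
  refine ⟨r * N, fun n => ?_⟩
  rcases le_total N n with hn | hn
  · exact (hN n hn).trans (le_add_of_nonneg_right (by positivity))
  · exact le_add_of_nonneg_of_le (by positivity) (by gcongr)

theorem exists_edist_le_mul_edist_spread_rpow (hb : 1 < b) {r : ℝ≥0} (hr : 0 < r)
    (h : ∀ᶠ n : ℕ in atTop, (r : ℝ) * n ≤ Nat.count p n) :
    ∃ C : ℝ≥0, ∀ t ∈ Ico (0 : ℝ) 1, ∀ u ∈ Ico (0 : ℝ) 1,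
      edist t u ≤ C * edist (spread b p t) (spread b p u) ^ (r : ℝ) := by
  have hb0 : (0 : ℝ) < b := Nat.cast_pos.2 (NeZero.pos b)
  have hb1 : (1 : ℝ) < b := Nat.one_lt_cast.2 hb
  have hp := infinite_of_eventually_mul_le_count (by exact_mod_cast hr) h
  obtain ⟨K, hK⟩ := exists_forall_mul_le_count_add h
  have hscale : ∀ n : ℕ, ((b : ℝ) ^ Nat.count p n)⁻¹ ≤ (b : ℝ) ^ K * ((b : ℝ)⁻¹ ^ n) ^ (r : ℝ) := by
    intro n
    rw [inv_pow, Real.inv_rpow (by positivity), ← Real.rpow_natCast, ← Real.rpow_natCast,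
      ← Real.rpow_mul hb0.le, ← Real.rpow_neg hb0.le, ← Real.rpow_neg hb0.le, ← Real.rpow_add hb0]
    exact Real.rpow_le_rpow_of_exponent_le hb1.le (by linarith [hK n])
  refine ⟨(2 * (b : ℝ) ^ K * b ^ (r : ℝ)).toNNReal, fun t ht u hu => ?_⟩
  have hst := spread_mem_Ico hb hp ht
  have hsu := spread_mem_Ico hb hp hu
  have hholder : |t - u| ≤
      2 * (b : ℝ) ^ K * (|spread b p t - spread b p u| / (b : ℝ)⁻¹) ^ (r : ℝ) := by
    refine le_mul_rpow_of_forall_le_pow (inv_pos.2 hb0) (inv_lt_one_of_one_lt₀ hb1) (by positivity)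
      (by exact_mod_cast hr) (abs_nonneg _) ?_ fun n hn => ?_
    · exact (abs_sub_lt_of_nonneg_of_lt hst.1 hst.2 hsu.1 hsu.2).le
    · rw [mul_assoc]
      rw [inv_pow] at hn
      exact (abs_sub_le_of_abs_spread_sub_le hb hp ht hu hn).trans (by gcongr; exact hscale n)
  rw [div_inv_eq_mul, mul_comm _ (b : ℝ), Real.mul_rpow hb0.le (abs_nonneg _), ← mul_assoc]
    at hholder
  rw [edist_dist, edist_dist, Real.dist_eq, Real.dist_eq,
    ENNReal.ofReal_rpow_of_nonneg (abs_nonneg _) r.coe_nonneg, ENNReal.ofNNReal_toNNReal,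
    ← ENNReal.ofReal_mul (by positivity)]
  exact ENNReal.ofReal_le_ofReal hholder

theorem le_dimH_restrictedDigitSet (hb : 1 < b) {r : ℝ≥0}
    (h : ∀ᶠ n : ℕ in atTop, (r : ℝ) * n ≤ Nat.count p n) :
    (r : ℝ≥0∞) ≤ dimH (restrictedDigitSet b p) := by
  rcases eq_zero_or_pos r with rfl | hr
  · simp
  have hp := infinite_of_eventually_mul_le_count (by exact_mod_cast hr) h
  obtain ⟨C, hC⟩ := exists_edist_le_mul_edist_spread_rpow hb hr h
  have hIco : dimH (Ico (0 : ℝ) 1) = 1 := by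
    simpa using Real.dimH_of_nonempty_interior (s := Ico (0 : ℝ) 1) (by simp)
  have hdim : 1 ≤ dimH (spread b p '' Ico (0 : ℝ) 1) / r :=
    hIco ▸ dimH_le_dimH_image_div_of_edist_le hr hC
  calc (r : ℝ≥0∞) = 1 * r := (one_mul _).symm
    _ ≤ dimH (spread b p '' Ico (0 : ℝ) 1) := ENNReal.mul_le_of_le_div hdim
    _ ≤ dimH (restrictedDigitSet b p) :=
      dimH_mono (image_subset_iff.2 fun _ => spread_mem_restrictedDigitSet hb hp)

theorem count_div_le_one (n : ℕ) : (Nat.count p n : ℝ) / n ≤ 1 :=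
  div_le_one_of_le₀ (by exact_mod_cast Nat.count_le p) n.cast_nonneg

theorem dimH_restrictedDigitSet_le_liminf (hb : 1 < b) :
    dimH (restrictedDigitSet b p) ≤
      ENNReal.ofReal (liminf (fun n : ℕ => (Nat.count p n : ℝ) / n) atTop) := by
  refine dimH_le fun d hd => le_of_not_gt fun hlt => ?_
  have hlim : liminf (fun n : ℕ => (Nat.count p n : ℝ) / n) atTop < d :=
    (Real.le_coe_toNNReal _).trans_lt (NNReal.coe_lt_coe.2 (ENNReal.coe_lt_coe.1 hlt))
  have hfreq : ∃ᶠ n : ℕ in atTop, (Nat.count p n : ℝ) / n < d :=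
    frequently_lt_of_liminf_lt (isBoundedUnder_of ⟨1, count_div_le_one⟩).isCoboundedUnder_ge hlim
  have hone := hausdorffMeasure_restrictedDigitSet_le_one (p := p) hb <|
    (hfreq.and_eventually (eventually_gt_atTop 0)).mono fun n ⟨hn, hn0⟩ =>
      ((div_lt_iff₀ (Nat.cast_pos.2 hn0)).1 hn).le
  simp [hd] at hone

theorem liminf_le_dimH_restrictedDigitSet (hb : 1 < b) :
    ENNReal.ofReal (liminf (fun n : ℕ => (Nat.count p n : ℝ) / n) atTop) ≤
      dimH (restrictedDigitSet b p) := by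
  refine ENNReal.le_of_forall_nnreal_lt fun r hr => le_dimH_restrictedDigitSet hb ?_
  have hlim : (r : ℝ) < liminf (fun n : ℕ => (Nat.count p n : ℝ) / n) atTop :=
    Real.lt_toNNReal_iff_coe_lt.1 (ENNReal.coe_lt_coe.1 hr)
  have hev : ∀ᶠ n : ℕ in atTop, (r : ℝ) < (Nat.count p n : ℝ) / n :=
    eventually_lt_of_lt_liminf hlim (isBoundedUnder_of ⟨0, fun n => by positivity⟩)
  filter_upwards [hev, eventually_gt_atTop 0] with n hn hn0
  exact ((lt_div_iff₀ (Nat.cast_pos.2 hn0)).1 hn).le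

end RestrictedDigits

theorem digit_succ (x : ℝ) (n : ℕ) : digit x (n + 1) = Real.digits x 2 n := by
  rw [digit, Int.floor_toNat, ← digitPrefix_succ_mod, digitPrefix, Nat.cast_ofNat]

theorem digit_zero {x : ℝ} (hx : x ∈ Ico (0 : ℝ) 1) : digit x 0 = 0 := by
  rw [digit, pow_zero, mul_one, Int.floor_eq_zero_iff.2 hx, Int.toNat_zero, Nat.zero_mod]

theorem ES_eq_restrictedDigitSet (S : ℕ → Bool) :
    ES S = restrictedDigitSet 2 fun n => S (n + 1) = true := by
  ext x
  refine and_congr_right fun hx => ⟨fun h n hn => ?_, fun h i hi => ?_⟩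
  · exact Fin.ext ((digit_succ x n).symm.trans (h (n + 1) (Bool.eq_false_iff.2 hn)))
  · cases i with
    | zero => exact digit_zero hx
    | succ n => rw [digit_succ, h n (Bool.eq_false_iff.1 hi), Fin.val_zero]

theorem ncard_inter_Icc_one_eq_count (p : ℕ → Prop) [DecidablePred p] (n : ℕ) :
    ({i | p i} ∩ Icc 1 n).ncard = Nat.count (fun k => p (k + 1)) n := by
  have himage : {i | p i} ∩ Icc 1 n =
      (· + 1) '' ((Finset.range n).filter fun k => p (k + 1) : Set ℕ) := by
    ext i
    cases i <;> simp [and_comm]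
  rw [himage, ncard_image_of_injective _ (add_left_injective 1), ncard_coe_finset,
    Nat.count_eq_card_filter_range]

theorem stmt12_general {b : ℕ} [NeZero b] (hb : 1 < b) (p : ℕ → Prop) [DecidablePred p] :
    dimH (restrictedDigitSet b p) =
      ENNReal.ofReal (liminf (fun n : ℕ => (Nat.count p n : ℝ) / n) atTop) :=
  (dimH_restrictedDigitSet_le_liminf hb).antisymm (liminf_le_dimH_restrictedDigitSet hb)

theorem stmt12 (S : ℕ → Bool) (α : ℝ) (hα : 0 < α)
    (hdens : Filter.liminf
      (fun n : ℕ => (({i : ℕ | S i = true} ∩ Set.Icc 1 n).ncard : ℝ) / n)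
      Filter.atTop = α) :
    dimH (ES S) = ENNReal.ofReal α := by
  rw [ES_eq_restrictedDigitSet, stmt12_general one_lt_two, ← hdens]
  simp only [ncard_inter_Icc_one_eq_count]
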